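/- arXiv:2002.00550 — 2 statements merged into one kernel-verified Lean document; each statement's English description precedes it below -/
import Mathlib

section
/- For every integer N, every positive natural number m, and every complex number w, the following identity holds: ∑_{k=0}^{m} C(m,k) · B_{m+k+1}((N−w)/2)/(m+k+1) · w^{m−k} = ((−1)^{m+1}/2^{2m+1}) · [ (2w)^{2m+1}/(2(2m+1)·C(2m,m)) − sign(N−1) · ∑_{k=1}^{|N−1|} ( w² − (|N−1|−2k+1)² )^m ], where sign(N−1) is 1 if N>1, −1 if N<1, and 0 if N=1 (in which case the second sum is empty). -/
open Finset

/-- The `n`-th Bernoulli polynomial evaluated at a complex number `x`. -/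
noncomputable def bernoulliPolyC (n : ℕ) (x : ℂ) : ℂ :=
  ((Polynomial.bernoulli n).map (algebraMap ℚ ℂ)).eval x

/-!
Let `T` be the linear operator `X ^ n ↦ Bₙ(X)` on polynomials. It commutes with translations,
satisfies `T Q (x + 1) - T Q x = Q' x`, and turns `Q (c - x)` into `T Q (1 + c - x)`. The left-hand
side of the identity is `T Q` at `(N - w) / 2`, where `Q` is the primitive of
`P = X ^ m * (X + w) ^ m` vanishing at `0`. Since `P (-w - x) = P x`, the polynomial
`Q (-w - x) + Q x` is constant, so the values of `T Q` at `(1 - w) / 2 ± (N - 1) / 2` add up to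
`Q (-w)`, a beta integral, while their difference telescopes to a sum of values of `P`.
-/

open Polynomial fwdDiff

theorem taylor_hasseDeriv {R : Type*} [Semiring R] (r : R) (k : ℕ) (P : R[X]) :
    taylor r (hasseDeriv k P) = hasseDeriv k (taylor r P) := by
  ext j
  have hcomp := congrArg (eval r) (LinearMap.congr_fun (hasseDeriv_comp (R := R) j k) P)
  rw [taylor_coeff, hasseDeriv_coeff, taylor_coeff, ← Nat.choose_symm_add]
  simpa [eval_natCast_mul] using hcomp

section BernoulliUmbral

variable {A : Type*} [CommRing A] [Algebra ℚ A]

/-- The Bernoulli umbral operator `D / (exp D - 1)` on polynomials: the linear map that sends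
`X ^ n` to the `n`-th Bernoulli polynomial. -/
noncomputable def bernoulliUmbral : A[X] →ₗ[A] A[X] :=
  lsum fun n => LinearMap.toSpanSingleton A A[X] ((Polynomial.bernoulli n).map (algebraMap ℚ A))

theorem bernoulliUmbral_monomial (n : ℕ) (a : A) :
    bernoulliUmbral (monomial n a) = a • (Polynomial.bernoulli n).map (algebraMap ℚ A) := by
  simp [bernoulliUmbral, lsum_apply, sum_monomial_index]

theorem taylor_one_bernoulliUmbral (P : A[X]) :
    taylor 1 (bernoulliUmbral P) = bernoulliUmbral P + derivative P := by
  induction P using Polynomial.induction_on' with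
  | add P Q hP hQ => simp only [map_add, hP, hQ]; abel
  | monomial n a =>
    have hshift := congrArg (Polynomial.map (algebraMap ℚ A))
      (Polynomial.bernoulli_comp_one_add_X n)
    rw [Polynomial.map_comp, Polynomial.map_add, Polynomial.map_one, map_X, add_comm 1 X] at hshift
    rw [bernoulliUmbral_monomial, map_smul, taylor_apply, C_1, hshift, derivative_monomial]
    simp [smul_add, ← C_mul_X_pow_eq_monomial, smul_eq_C_mul, mul_assoc]

theorem bernoulliUmbral_eq_sum_hasseDeriv {N : ℕ} {P : A[X]} (hN : P.natDegree < N) :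
    bernoulliUmbral P =
      ∑ k ∈ range N, algebraMap ℚ A (_root_.bernoulli k) • hasseDeriv k P := by
  have hmonomial (n : ℕ) (hn : n < N) (a : A) : bernoulliUmbral (monomial n a) =
      ∑ k ∈ range N, algebraMap ℚ A (_root_.bernoulli k) • hasseDeriv k (monomial n a) := by
    rw [bernoulliUmbral_monomial, Polynomial.bernoulli, Polynomial.map_sum, Finset.smul_sum]
    refine Finset.sum_subset_zero_on_sdiff (range_mono hn) (fun k hk => ?_) fun k _ => ?_
    · have hnk : n < k := by simpa using (mem_sdiff.mp hk).2
      simp [Nat.choose_eq_zero_of_lt hnk]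
    · simp only [hasseDeriv_monomial, map_monomial, smul_monomial, smul_eq_mul, map_mul,
        map_natCast]
      congr 1
      ring
  rw [P.as_sum_range' N hN]
  simp only [map_sum, Finset.smul_sum]
  rw [Finset.sum_comm]
  refine Finset.sum_congr rfl fun n hn => ?_
  rw [hmonomial n (mem_range.mp hn)]

theorem taylor_bernoulliUmbral (r : A) (P : A[X]) :
    taylor r (bernoulliUmbral P) = bernoulliUmbral (taylor r P) := by
  rw [bernoulliUmbral_eq_sum_hasseDeriv (Nat.lt_succ_self P.natDegree),
    bernoulliUmbral_eq_sum_hasseDeriv ((natDegree_taylor P r).trans_lt (Nat.lt_succ_self _))]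
  simp only [map_sum, map_smul, taylor_hasseDeriv]

theorem bernoulliUmbral_comp_neg_X (P : A[X]) :
    bernoulliUmbral (P.comp (-X)) = (bernoulliUmbral P).comp (1 - X) := by
  induction P using Polynomial.induction_on' with
  | add P Q hP hQ => simp only [map_add, add_comp, hP, hQ]
  | monomial n a =>
    have hneg : (monomial n a).comp (-X : A[X]) = (-1 : A) ^ n • monomial n a := by
      rw [monomial_comp, neg_pow, ← C_mul_X_pow_eq_monomial, smul_eq_C_mul]
      simp [mul_left_comm]
    have hreflect := congrArg (Polynomial.map (algebraMap ℚ A))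
      (Polynomial.bernoulli_comp_one_sub_X n)
    rw [Polynomial.map_comp, Polynomial.map_sub, Polynomial.map_one, map_X] at hreflect
    rw [hneg, map_smul, bernoulliUmbral_monomial, smul_comp, hreflect, smul_comm]
    simp [smul_eq_C_mul]

theorem bernoulliUmbral_comp_C_sub_X (c : A) (P : A[X]) :
    bernoulliUmbral (P.comp (C c - X)) = (bernoulliUmbral P).comp (C (1 + c) - X) := by
  have hcomp : P.comp (C c - X) = taylor (-c) (P.comp (-X)) := by
    simp [taylor_apply, comp_assoc, sub_eq_add_neg, add_comm]
  rw [hcomp, ← taylor_bernoulliUmbral, bernoulliUmbral_comp_neg_X, taylor_apply, comp_assoc]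
  congr 1
  simp only [sub_comp, one_comp, X_comp, map_add, map_neg, map_one]
  ring

theorem eval_bernoulliUmbral_one_add_sub {c κ : A} {Q : A[X]}
    (hQ : Q.comp (C c - X) = C κ - Q) (x : A) :
    (bernoulliUmbral Q).eval (1 + c - x) = κ - (bernoulliUmbral Q).eval x := by
  have hC : bernoulliUmbral (C κ) = C κ := by
    simpa [smul_eq_C_mul] using bernoulliUmbral_monomial 0 κ
  have h := congrArg (fun P => (bernoulliUmbral P).eval x) hQ
  simpa [bernoulliUmbral_comp_C_sub_X, hC] using h

theorem fwdDiff_one_eval_bernoulliUmbral (P : A[X]) :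
    Δ_[1] (bernoulliUmbral P).eval = (derivative P).eval := by
  ext x
  have h := congrArg (eval x) (taylor_one_bernoulliUmbral P)
  rw [taylor_eval, eval_add] at h
  rw [fwdDiff, h, add_sub_cancel_left]

end BernoulliUmbral

theorem sum_Icc_fwdDiff_one_sub {M G : Type*} [AddCommGroupWithOne M] [AddCommGroup G]
    (f : M → G) (x : M) (n : ℕ) :
    ∑ k ∈ Icc 1 n, Δ_[1] f (x - k) = f x - f (x - n) := by
  induction n with
  | zero => simp
  | succ n ih =>
    have hstep : x - (n + 1 : ℕ) + 1 = x - n := by push_cast; abel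
    rw [sum_Icc_succ_top (Nat.le_add_left 1 n), ih, fwdDiff, hstep]
    abel

theorem sub_eq_sign_smul_sum_fwdDiff_one {K G : Type*} [DivisionRing K] [NeZero (2 : K)]
    [AddCommGroup G] (f : K → G) (c : K) (n : ℤ) :
    f (c + n / 2) - f (c - n / 2) =
      n.sign • ∑ k ∈ Icc 1 n.natAbs, Δ_[1] f (c + n.natAbs / 2 - k) := by
  have hnat (M : ℕ) : ∑ k ∈ Icc 1 M, Δ_[1] f (c + M / 2 - k) = f (c + M / 2) - f (c - M / 2) := by
    rw [sum_Icc_fwdDiff_one_sub]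
    congr 2
    nth_rw 2 [← add_halves (M : K)]
    abel
  rw [hnat]
  rcases lt_trichotomy n 0 with hn | rfl | hn
  · have hcast : (n : K) = -(n.natAbs : K) := by
      rw [← Int.cast_natCast, ← Int.cast_neg, Int.ofNat_natAbs_of_nonpos hn.le, neg_neg]
    rw [hcast, Int.sign_eq_neg_one_of_neg hn, neg_div, sub_neg_eq_add, ← sub_eq_add_neg]
    simp
  · simp
  · have hcast : (n : K) = n.natAbs := by
      rw [← Int.cast_natCast, Int.natAbs_of_nonneg hn.le]
    rw [hcast, Int.sign_eq_one_of_pos hn, one_smul]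

theorem comp_C_sub_X_eq_of_derivative {R : Type*} [CommRing R] [IsAddTorsionFree R] {c : R}
    {Q : R[X]} (hQ : (derivative Q).comp (C c - X) = derivative Q) :
    Q.comp (C c - X) = C (Q.eval 0 + Q.eval c) - Q := by
  have hconst : derivative (Q.comp (C c - X) + Q) = 0 := by
    simp [derivative_comp, hQ]
  rw [eq_sub_iff_add_eq, eq_C_of_derivative_eq_zero hconst, coeff_zero_eq_eval_zero]
  simp [eval_comp, add_comm]

theorem X_pow_mul_X_add_C_pow_comp_C_neg_sub_X {R : Type*} [CommRing R] (m : ℕ) (w : R) :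
    (X ^ m * (X + C w) ^ m).comp (C (-w) - X) = X ^ m * (X + C w) ^ m := by
  simp only [← mul_pow, pow_comp, mul_comp, X_comp, add_comp, C_comp, map_neg]
  ring

section Field

variable {K : Type*} [Field K]

/-- The polynomial incomplete beta function `∫₀^X t ^ a * (t + w) ^ b dt`, integrated
term by term so as to make sense over any field of characteristic zero. -/
noncomputable def incompleteBeta (a b : ℕ) (w : K) : K[X] :=
  ∑ k ∈ range (b + 1), monomial (a + k + 1) (b.choose k * w ^ (b - k) / (a + k + 1))

theorem eval_zero_incompleteBeta (a b : ℕ) (w : K) : (incompleteBeta a b w).eval 0 = 0 := by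
  simp [incompleteBeta, eval_finsetSum]

variable [CharZero K]

theorem two_mul_eval_bernoulliUmbral_of_derivative_comp {c : K} {Q : K[X]}
    (hQ : (derivative Q).comp (C c - X) = derivative Q) (n : ℤ) :
    2 * (bernoulliUmbral Q).eval ((1 + c) / 2 + n / 2) = Q.eval 0 + Q.eval c +
      n.sign * ∑ k ∈ Icc 1 n.natAbs, (derivative Q).eval ((1 + c) / 2 + n.natAbs / 2 - k) := by
  have hreflect := eval_bernoulliUmbral_one_add_sub (comp_C_sub_X_eq_of_derivative hQ)
    ((1 + c) / 2 + n / 2)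
  have hshift := sub_eq_sign_smul_sum_fwdDiff_one (bernoulliUmbral Q).eval ((1 + c) / 2) n
  rw [show 1 + c - ((1 + c) / 2 + n / 2) = (1 + c) / 2 - n / 2 by ring] at hreflect
  rw [fwdDiff_one_eval_bernoulliUmbral, zsmul_eq_mul, hreflect] at hshift
  linear_combination hshift

theorem leibniz_harmonic_triangle_recurrence (a n : ℕ) :
    1 / ((a + n + 1 : K) * (a + n).choose n) - 1 / ((a + 1 + n + 1 : K) * (a + 1 + n).choose n) =
      1 / ((a + (n + 1) + 1 : K) * (a + (n + 1)).choose (n + 1)) := by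
  have hbot : (a + 1 + n).choose n * (a + 1 : K) = (a + n).choose n * (a + n + 1) := by
    have h := Nat.choose_mul_succ_eq (a + n) n
    rw [show a + n + 1 - n = a + 1 by lia] at h
    rw [add_right_comm a 1 n]
    exact_mod_cast h.symm
  have htop : (a + (n + 1)).choose (n + 1) * (n + 1 : K) = (a + n).choose n * (a + n + 1) := by
    rw [mul_comm ((a + n).choose n : K)]
    exact_mod_cast (Nat.add_one_mul_choose_eq (a + n) n).symm
  have hcast_ne (i : ℕ) : (i + 1 : K) ≠ 0 := mod_cast i.succ_ne_zero
  have hrow : (a + n + 1 : K) ≠ 0 := mod_cast hcast_ne (a + n)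
  have hnext_row : (a + n + 1 + 1 : K) ≠ 0 := mod_cast hcast_ne (a + n + 1)
  have hchoose : ((a + n).choose n : K) ≠ 0 := mod_cast (Nat.choose_pos (Nat.le_add_left n a)).ne'
  rw [eq_div_of_mul_eq (hcast_ne a) hbot, eq_div_of_mul_eq (hcast_ne n) htop,
    add_right_comm (a : K) 1, ← add_assoc (a : K)]
  field_simp [hcast_ne a, hcast_ne n]
  ring

theorem fwdDiff_one_iter_one_div_natCast_add_one (n : ℕ) :
    (Δ_[1])^[n] (fun a : ℕ => 1 / (a + 1 : K)) =
      fun a : ℕ => (-1) ^ n * (1 / ((a + n + 1 : K) * (a + n).choose n)) := by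
  induction n with
  | zero => simp
  | succ n ih =>
    ext a
    rw [Function.iterate_succ_apply', ih, fwdDiff]
    push_cast
    rw [← leibniz_harmonic_triangle_recurrence]
    ring

theorem sum_neg_one_pow_mul_choose_div (a n : ℕ) :
    ∑ k ∈ range (n + 1), (-1) ^ k * (n.choose k : K) / (a + k + 1) =
      1 / ((a + n + 1) * (a + n).choose n) := by
  calc
    _ = (-1) ^ n * (Δ_[1])^[n] (fun a : ℕ => 1 / (a + 1 : K)) a := by
      rw [fwdDiff_iter_eq_sum_shift, Finset.mul_sum]
      refine Finset.sum_congr rfl fun k hk => ?_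
      obtain ⟨j, rfl⟩ := Nat.exists_eq_add_of_le (mem_range_succ_iff.mp hk)
      have hj : ((-1 : K) ^ j) * (-1) ^ j = 1 := by simp [← mul_pow]
      simp only [zsmul_eq_mul, Nat.add_sub_cancel_left, smul_eq_mul, mul_one]
      push_cast
      rw [pow_add, div_eq_mul_one_div]
      linear_combination (-(-1 : K) ^ k * (k + j).choose k * (1 / (a + k + 1 : K))) * hj
    _ = _ := by
      rw [fwdDiff_one_iter_one_div_natCast_add_one, ← mul_assoc, ← mul_pow, neg_one_mul, neg_neg,
        one_pow, one_mul]

theorem derivative_incompleteBeta (a b : ℕ) (w : K) :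
    derivative (incompleteBeta a b w) = X ^ a * (X + C w) ^ b := by
  rw [incompleteBeta, derivative_sum, add_pow, Finset.mul_sum]
  refine Finset.sum_congr rfl fun k _ => ?_
  have hk : (a + k + 1 : K) ≠ 0 := mod_cast (a + k).succ_ne_zero
  rw [derivative_monomial_succ]
  push_cast
  rw [div_mul_cancel₀ _ hk, ← C_mul_X_pow_eq_monomial]
  simp only [map_mul, map_pow, map_natCast]
  ring

theorem eval_neg_incompleteBeta (a b : ℕ) (w : K) :
    (incompleteBeta a b w).eval (-w) =
      (-1) ^ (a + 1) * w ^ (a + b + 1) / ((a + b + 1) * (a + b).choose b) := by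
  rw [mul_div_assoc, ← mul_one_div, ← mul_assoc,
    ← sum_neg_one_pow_mul_choose_div, incompleteBeta, eval_finsetSum, Finset.mul_sum]
  refine Finset.sum_congr rfl fun k hk => ?_
  obtain ⟨j, rfl⟩ := Nat.exists_eq_add_of_le (mem_range_succ_iff.mp hk)
  rw [eval_monomial, Nat.add_sub_cancel_left, neg_pow]
  ring

theorem eval_bernoulliUmbral_incompleteBeta (a b : ℕ) (w x : K) :
    (bernoulliUmbral (incompleteBeta a b w)).eval x =
      ∑ k ∈ range (b + 1), (b.choose k : K) *
        (aeval x (Polynomial.bernoulli (a + k + 1)) / (a + k + 1)) * w ^ (b - k) := by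
  rw [incompleteBeta, map_sum, eval_finsetSum]
  refine Finset.sum_congr rfl fun k _ => ?_
  rw [bernoulliUmbral_monomial, eval_smul, eval_map_algebraMap, smul_eq_mul]
  ring

theorem stmt_0_general (N : ℤ) (m : ℕ) (w : K) :
    ∑ k ∈ range (m + 1),
        (m.choose k : K) * (aeval (((N : K) - w) / 2) (Polynomial.bernoulli (m + k + 1))
          / (m + k + 1)) * w ^ (m - k)
      = (-1) ^ (m + 1) / 2 ^ (2 * m + 1) *
          ((2 * w) ^ (2 * m + 1) / (2 * (2 * m + 1) * ((2 * m).choose m)) -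
            ((N - 1).sign : K) *
              ∑ k ∈ Icc 1 (N - 1).natAbs,
                (w ^ 2 - (((N - 1).natAbs : K) - 2 * (k : K) + 1) ^ 2) ^ m) := by
  have hcenter : ((N : K) - w) / 2 = (1 + -w) / 2 + (N - 1 : ℤ) / 2 := by push_cast; ring
  have hterm (k : ℕ) :
      (derivative (incompleteBeta m m w)).eval ((1 + -w) / 2 + (N - 1).natAbs / 2 - k) =
        (-1) ^ m / 2 ^ (2 * m) * (w ^ 2 - (((N - 1).natAbs : K) - 2 * k + 1) ^ 2) ^ m := by
    rw [derivative_incompleteBeta, pow_mul, ← div_pow, ← mul_pow]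
    simp only [eval_mul, eval_pow, eval_add, eval_X, eval_C, ← mul_pow]
    ring
  have hsymm : (derivative (incompleteBeta m m w)).comp (C (-w) - X) =
      derivative (incompleteBeta m m w) := by
    rw [derivative_incompleteBeta, X_pow_mul_X_add_C_pow_comp_C_neg_sub_X]
  have hsum := two_mul_eval_bernoulliUmbral_of_derivative_comp hsymm (N - 1)
  rw [← hcenter, eval_bernoulliUmbral_incompleteBeta, eval_zero_incompleteBeta,
    eval_neg_incompleteBeta, zero_add] at hsum
  simp only [hterm, ← Finset.mul_sum, ← two_mul] at hsum
  rw [← mul_right_inj' (two_ne_zero (α := K)), hsum]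
  have hpow : (2 : K) ^ (2 * m) ≠ 0 := pow_ne_zero _ two_ne_zero
  generalize ∑ k ∈ Icc 1 (N - 1).natAbs, (_ : K) = S
  rw [pow_succ 2, mul_pow]
  field_simp
  ring

end Field

theorem stmt_0 (N : ℤ) (m : ℕ) (hm : 0 < m) (w : ℂ) :
    ∑ k ∈ Finset.range (m + 1),
        (m.choose k : ℂ) * (bernoulliPolyC (m + k + 1) (((N : ℂ) - w) / 2) / (m + k + 1))
          * w ^ (m - k)
      = (-1) ^ (m + 1) / 2 ^ (2 * m + 1) *
          ((2 * w) ^ (2 * m + 1) / (2 * (2 * m + 1) * ((2 * m).choose m)) -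
            ((N - 1).sign : ℂ) *
              ∑ k ∈ Finset.Icc 1 (N - 1).natAbs,
                (w ^ 2 - (((N - 1).natAbs : ℂ) - 2 * (k : ℂ) + 1) ^ 2) ^ m) := by
  simp only [bernoulliPolyC, eval_map_algebraMap]
  exact stmt_0_general N m w
end

section
/- For every positive natural number m, (−1)^{m+1} · ∑_{k=0}^{m} C(m,k) · (B_{m+k+1}/(m+k+1)) · 2^k = 1/( 2^{m+2}·(2m+1)·C(2m,m) ) + (1/2^{3m+2}) · ∑_{k=0}^{m} (−1)^k · C(m,k) · E_{2k}, where E_n denotes the n-th Euler number. -/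
open Finset

/-- The `n`-th Euler (secant) number, defined as the `n`-th Taylor coefficient (times `n!`)
of the exponential generating function `2 / (e^z + e^(-z))`, i.e. the `n`-th derivative
of that function at `0`. -/
noncomputable def eulerNumber (n : ℕ) : ℂ :=
  iteratedDeriv n (fun z : ℂ => 2 / (Complex.exp z + Complex.exp (-z))) 0

/-!
Let `L` be the linear functional on polynomials with `L (X ^ n) = B_{n+1} / (n + 1)`. Up to the
factor `2 ^ m`, the Bernoulli sum is the value of `L` at
`X ^ m * (X + 1/2) ^ m = ((X + 1/4) ^ 2 - 1/16) ^ m`, so it is also a combination of the numbers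
`L ((X + 1/4) ^ (2 * k)) = (B_{2k+1}(1/4) - (1/4) ^ (2k+1)) / (2k+1)`. Comparing generating
functions and using the reflection `x ↦ 1 - x`, the Bernoulli polynomial value is
`-(2k+1) E_{2k} / 4 ^ (2k+1)`. The remaining sum of `(-1) ^ k * C(m, k) / (2k+1)` is an iterated
difference of `x ↦ 1 / x`.
-/

section ForwardDifference

open fwdDiff Nat

variable {K : Type*} [Field K]

theorem fwdDiff_iter_inv (h : K) (n : ℕ) (x : K) (hx : ∀ k ≤ n, x + k * h ≠ 0) :
    Δ_[h] ^[n] (fun y => y⁻¹) x = (-h) ^ n * n ! / ∏ k ∈ range (n + 1), (x + k * h) := by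
  induction n generalizing x with
  | zero => simp
  | succ n ih =>
    have shift (k : ℕ) : x + h + k * h = x + (k + 1 : ℕ) * h := by push_cast; ring
    have hx_shift : ∀ k ≤ n, x + h + k * h ≠ 0 := fun k hk => shift k ▸ hx (k + 1) (by lia)
    have hprod : ∏ k ∈ range (n + 2), (x + k * h) =
        (∏ k ∈ range (n + 1), (x + h + k * h)) * x := by
      simp [prod_range_succ', shift]
    have hprod' : ∏ k ∈ range (n + 2), (x + k * h) =
        (∏ k ∈ range (n + 1), (x + k * h)) * (x + (n + 1 : ℕ) * h) := prod_range_succ _ _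
    have hne : ∏ k ∈ range (n + 2), (x + k * h) ≠ 0 :=
      prod_ne_zero_iff.mpr fun k hk => hx k (by simpa [Nat.lt_succ_iff] using hk)
    have hQ := left_ne_zero_of_mul (hprod ▸ hne)
    have hP := left_ne_zero_of_mul (hprod' ▸ hne)
    rw [Function.iterate_succ_apply', fwdDiff, ih _ hx_shift,
      ih x fun k hk => hx k (by lia), div_sub_div _ _ hQ hP, div_eq_div_iff (mul_ne_zero hQ hP) hne,
      Nat.factorial_succ]
    push_cast at hprod' ⊢
    linear_combination
      (-h) ^ n * n ! * (∏ k ∈ range (n + 1), (x + k * h)) * hprod -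
        (-h) ^ n * n ! * (∏ k ∈ range (n + 1), (x + h + k * h)) * hprod'

theorem sum_neg_one_pow_mul_choose_mul_inv (h : K) (n : ℕ) (x : K)
    (hx : ∀ k ≤ n, x + k * h ≠ 0) :
    ∑ k ∈ range (n + 1), (-1) ^ k * (n.choose k : K) * (x + k * h)⁻¹ =
      h ^ n * n ! / ∏ k ∈ range (n + 1), (x + k * h) := by
  calc ∑ k ∈ range (n + 1), (-1) ^ k * (n.choose k : K) * (x + k * h)⁻¹
      = (-1) ^ n * Δ_[h] ^[n] (fun y => y⁻¹) x := by
        rw [fwdDiff_iter_eq_sum_shift, mul_sum]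
        refine sum_congr rfl fun k hk => ?_
        have hsign : (-1) ^ n * (-1) ^ (n - k) = (-1 : K) ^ k := by
          rw [← pow_mul_pow_sub (-1) (mem_range_succ_iff.mp hk), mul_assoc, ← mul_pow]
          simp
        simp only [zsmul_eq_mul, nsmul_eq_mul, ← hsign]
        push_cast
        ring
    _ = h ^ n * n ! / ∏ k ∈ range (n + 1), (x + k * h) := by
        rw [fwdDiff_iter_inv h n x hx, mul_div_assoc, ← mul_assoc, ← mul_pow, neg_one_mul, neg_neg,
          mul_div_assoc]

theorem two_mul_add_one_mul_centralBinom_mul_factorial (n : ℕ) :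
    (2 * n + 1) * n.centralBinom * n ! = 2 ^ n * (2 * n + 1)‼ := by
  refine Nat.eq_of_mul_eq_mul_right n.factorial_pos ?_
  calc (2 * n + 1) * n.centralBinom * n ! * n !
      = (2 * n + 1) * ((2 * n).choose n * n ! * (2 * n - n)!) := by
        rw [Nat.centralBinom, two_mul, Nat.add_sub_cancel]; ring
    _ = (2 * n + 1)! := by
        rw [Nat.choose_mul_factorial_mul_factorial (by lia), Nat.factorial_succ]
    _ = 2 ^ n * (2 * n + 1)‼ * n ! := by
        rw [Nat.factorial_eq_mul_doubleFactorial, Nat.doubleFactorial_two_mul]; ring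

theorem sum_neg_one_pow_mul_choose_div_two_mul_add_one [CharZero K] (n : ℕ) :
    ∑ k ∈ range (n + 1), (-1) ^ k * (n.choose k : K) / (2 * k + 1) =
      4 ^ n / ((2 * n + 1) * n.centralBinom) := by
  have hodd (k : ℕ) : (1 + k * 2 : K) ≠ 0 := by norm_cast; lia
  have hprod : ∏ k ∈ range (n + 1), (1 + k * 2 : K) = ((2 * n + 1)‼ : K) := by
    rw [Nat.doubleFactorial_eq_prod_odd, prod_range_succ']
    push_cast
    simp [mul_comm, add_comm]
  have hcoeff : ((2 * n + 1) * n.centralBinom * n ! : K) = 2 ^ n * ((2 * n + 1)‼ : K) := by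
    exact_mod_cast two_mul_add_one_mul_centralBinom_mul_factorial n
  have hfact : ((2 * n + 1)‼ : K) ≠ 0 := by exact_mod_cast (Nat.doubleFactorial_pos _).ne'
  have hbinom : ((2 * n + 1) * n.centralBinom : K) ≠ 0 := by
    exact_mod_cast mul_ne_zero (2 * n).succ_ne_zero n.centralBinom_ne_zero
  have h4 : (4 : K) ^ n = 2 ^ n * 2 ^ n := by rw [← mul_pow]; norm_num
  calc ∑ k ∈ range (n + 1), (-1) ^ k * (n.choose k : K) / (2 * k + 1)
      = ∑ k ∈ range (n + 1), (-1) ^ k * (n.choose k : K) * (1 + k * 2 : K)⁻¹ := by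
        simp only [div_eq_mul_inv, add_comm (1 : K), mul_comm _ (2 : K)]
    _ = 2 ^ n * n ! / ((2 * n + 1)‼ : K) := by
        rw [sum_neg_one_pow_mul_choose_mul_inv 2 n 1 fun k _ => hodd k, hprod]
    _ = 4 ^ n / ((2 * n + 1) * n.centralBinom) := by
        rw [div_eq_div_iff hfact hbinom, h4]
        linear_combination 2 ^ n * hcoeff

end ForwardDifference

section MaclaurinSeries

open PowerSeries
open scoped ContDiff Topology Nat

variable {𝕜 : Type*} [NontriviallyNormedField 𝕜]

/-- The formal Taylor series at `0` of a function `f`, that is, the exponential generating function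
of the derivatives of `f` at `0`. It is meaningful only for `f` smooth at `0`. -/
noncomputable def maclaurinSeries (f : 𝕜 → 𝕜) : 𝕜⟦X⟧ :=
  mk fun n => iteratedDeriv n f 0 / n !

theorem maclaurinSeries_congr {f g : 𝕜 → 𝕜} (h : f =ᶠ[𝓝 0] g) :
    maclaurinSeries f = maclaurinSeries g := by
  ext n
  simp only [maclaurinSeries, coeff_mk, h.iteratedDeriv_eq n]

theorem maclaurinSeries_const (c : 𝕜) : maclaurinSeries (fun _ => c) = C c := by
  ext n
  rw [maclaurinSeries, coeff_mk, iteratedDeriv_const, coeff_C]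
  split_ifs with hn <;> simp [hn]

theorem maclaurinSeries_add {f g : 𝕜 → 𝕜} (hf : ContDiffAt 𝕜 ∞ f 0) (hg : ContDiffAt 𝕜 ∞ g 0) :
    maclaurinSeries (fun z => f z + g z) = maclaurinSeries f + maclaurinSeries g := by
  ext n
  have hn : (n : ℕ∞ω) ≤ ∞ := mod_cast le_top
  simp only [maclaurinSeries, map_add, coeff_mk,
    iteratedDeriv_fun_add (hf.of_le hn) (hg.of_le hn), add_div]

theorem maclaurinSeries_mul [CharZero 𝕜] {f g : 𝕜 → 𝕜} (hf : ContDiffAt 𝕜 ∞ f 0)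
    (hg : ContDiffAt 𝕜 ∞ g 0) :
    maclaurinSeries (fun z => f z * g z) = maclaurinSeries f * maclaurinSeries g := by
  ext n
  have hn : (n : ℕ∞ω) ≤ ∞ := mod_cast le_top
  rw [coeff_mul, Finset.Nat.sum_antidiagonal_eq_sum_range_succ_mk]
  simp only [maclaurinSeries, coeff_mk, iteratedDeriv_fun_mul (hf.of_le hn) (hg.of_le hn), sum_div]
  refine sum_congr rfl fun k hk => ?_
  have hfact : (n ! : 𝕜) ≠ 0 := mod_cast n.factorial_ne_zero
  rw [Nat.cast_choose 𝕜 (mem_range_succ_iff.mp hk)]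
  field_simp

theorem maclaurinSeries_cexp_const_mul (c : ℂ) :
    maclaurinSeries (fun z => Complex.exp (c * z)) = rescale c (exp ℂ) := by
  ext n
  simp [maclaurinSeries, iteratedDeriv_cexp_const_mul, coeff_rescale, coeff_exp, div_eq_mul_inv]

end MaclaurinSeries

section EulerNumbers

open PowerSeries
open scoped ContDiff Topology Nat

/-- The exponential generating function of the Euler numbers, as a formal power series. -/
noncomputable def eulerPowerSeries : ℂ⟦X⟧ :=
  mk fun n => eulerNumber n / n !

theorem eulerPowerSeries_mul_exp_add_exp_neg :
    eulerPowerSeries * (exp ℂ + rescale (-1) (exp ℂ)) = 2 := by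
  let cosh₂ : ℂ → ℂ := fun z => Complex.exp z + Complex.exp (-z)
  have hcosh : maclaurinSeries cosh₂ = exp ℂ + rescale (-1) (exp ℂ) := by
    have h1 := maclaurinSeries_cexp_const_mul 1
    have h2 := maclaurinSeries_cexp_const_mul (-1)
    simp only [one_mul, neg_one_mul, rescale_one, RingHom.id_apply] at h1 h2
    rw [maclaurinSeries_add (by fun_prop) (by fun_prop), h1, h2]
  have hsech : ContDiffAt ℂ ∞ (fun z => 2 / cosh₂ z) 0 :=
    ContDiffAt.div (by fun_prop) (by fun_prop) (by simp [cosh₂])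
  have hne : ∀ᶠ z in 𝓝 0, cosh₂ z ≠ 0 :=
    ContinuousAt.eventually_ne (by fun_prop) (by simp [cosh₂])
  calc eulerPowerSeries * (exp ℂ + rescale (-1) (exp ℂ))
      = maclaurinSeries (fun z => 2 / cosh₂ z) * maclaurinSeries cosh₂ := by rw [hcosh]; rfl
    _ = maclaurinSeries (fun z => 2 / cosh₂ z * cosh₂ z) :=
        (maclaurinSeries_mul hsech (by fun_prop)).symm
    _ = maclaurinSeries (fun _ => 2) :=
        maclaurinSeries_congr (hne.mono fun z hz => div_mul_cancel₀ 2 hz)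
    _ = 2 := by rw [maclaurinSeries_const, map_ofNat]

end EulerNumbers

section BernoulliPolynomials

open PowerSeries
open scoped Nat

variable {A : Type*} [CommRing A] [Algebra ℚ A]

theorem aeval_bernoulli_one_sub (n : ℕ) (x : A) :
    Polynomial.aeval (1 - x) (Polynomial.bernoulli n) =
      (-1) ^ n * Polynomial.aeval x (Polynomial.bernoulli n) := by
  simpa [Polynomial.aeval_comp] using
    congrArg (Polynomial.aeval x) (Polynomial.bernoulli_comp_one_sub_X n)

/-- The exponential generating function `X * exp (t * X) / (exp X - 1)` of the values at `t` of the
Bernoulli polynomials, in the form of `Polynomial.bernoulli_generating_function`. -/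
noncomputable def bernoulliPolynomialSeries (t : A) : A⟦X⟧ :=
  mk fun n => Polynomial.aeval t ((1 / n ! : ℚ) • Polynomial.bernoulli n)

theorem rescale_natCast_bernoulliPolynomialSeries_mul_exp_pow_sub_one (t : A) (n : ℕ) :
    rescale (n : A) (bernoulliPolynomialSeries t) * (exp A ^ n - 1) =
      (n : A⟦X⟧) * X * rescale (t * n) (exp A) := by
  have h : bernoulliPolynomialSeries t * (exp A - 1) = X * rescale t (exp A) :=
    Polynomial.bernoulli_generating_function t
  simpa [rescale_X, rescale_rescale, exp_pow_eq_rescale_exp] using congrArg (rescale (n : A)) h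

theorem rescale_four_bernoulliPolynomialSeries_sub :
    rescale (4 : ℂ) (bernoulliPolynomialSeries (1 / 4) - bernoulliPolynomialSeries (1 - 1 / 4)) =
      -2 * X * eulerPowerSeries := by
  set a := exp ℂ
  set b := rescale (-1 : ℂ) a
  have hab : a * b = 1 := exp_mul_exp_neg_eq_one
  have hgen (t : ℂ) (k : ℕ) (hk : t * 4 = k) :
      rescale (4 : ℂ) (bernoulliPolynomialSeries t) * (a ^ 4 - 1) = 4 * X * a ^ k := by
    have h := rescale_natCast_bernoulliPolynomialSeries_mul_exp_pow_sub_one t 4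
    push_cast at h
    rwa [hk, ← exp_pow_eq_rescale_exp] at h
  have hne : a ^ 4 - 1 ≠ 0 := fun h => by
    simpa [exp_pow_eq_rescale_exp, a, coeff_one] using congrArg (coeff 1) h
  refine mul_right_cancel₀ hne ?_
  rw [map_sub, sub_mul, hgen (1 / 4) 1 (by norm_num), hgen (1 - 1 / 4) 3 (by norm_num)]
  linear_combination 2 * X * a * (1 - a ^ 2) * (-eulerPowerSeries_mul_exp_add_exp_neg) +
    2 * X * eulerPowerSeries * (1 - a ^ 2) * hab

theorem aeval_bernoulli_one_quarter_sub (n : ℕ) :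
    4 ^ (n + 1) * (Polynomial.aeval (1 / 4 : ℂ) (Polynomial.bernoulli (n + 1)) -
      Polynomial.aeval (1 - 1 / 4 : ℂ) (Polynomial.bernoulli (n + 1))) =
      -2 * (n + 1) * eulerNumber n := by
  have h := congrArg (coeff (n + 1)) rescale_four_bernoulliPolynomialSeries_sub
  have hC : (-2 : ℂ⟦X⟧) = C (-2) := by rw [map_neg, map_ofNat]
  have hfact : (n ! : ℂ) ≠ 0 := mod_cast n.factorial_ne_zero
  rw [hC, mul_assoc, coeff_C_mul, coeff_succ_X_mul, coeff_rescale, map_sub] at h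
  simp only [bernoulliPolynomialSeries, eulerPowerSeries, coeff_mk, map_smul, Rat.smul_def,
    Nat.factorial_succ] at h
  push_cast at h
  field_simp at h ⊢
  linear_combination h

theorem aeval_bernoulli_one_quarter_of_even {n : ℕ} (hn : Even n) :
    4 ^ (n + 1) * Polynomial.aeval (1 / 4 : ℂ) (Polynomial.bernoulli (n + 1)) =
      -(n + 1) * eulerNumber n := by
  have h := aeval_bernoulli_one_quarter_sub n
  rw [aeval_bernoulli_one_sub, hn.add_one.neg_one_pow] at h
  linear_combination h / 2

end BernoulliPolynomials

section BernoulliFunctional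

open Polynomial hiding bernoulli

theorem X_pow_mul_X_add_C_two_mul_pow {R : Type*} [CommRing R] (a : R) (m : ℕ) :
    (X ^ m * (X + C (2 * a)) ^ m : R[X]) =
      ∑ k ∈ range (m + 1), (m.choose k * (-a ^ 2) ^ (m - k)) • (X + C a) ^ (2 * k) := by
  have hsquare : (X * (X + C (2 * a)) : R[X]) = (X + C a) ^ 2 + C (-a ^ 2) := by
    simp only [map_mul, map_neg, map_pow, map_ofNat]
    ring
  rw [← mul_pow, hsquare, add_pow]
  refine sum_congr rfl fun k _ => ?_
  simp only [smul_eq_C_mul, map_mul, map_pow, map_natCast, ← pow_mul]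
  ring

variable {A : Type*} [CommRing A] [Algebra ℚ A]

/-- The `A`-linear functional on `A[X]` sending `X ^ n` to `B_{n+1} / (n + 1)`, which turns sums
involving these numbers into polynomial identities. -/
noncomputable def bernoulliFunctional : A[X] →ₗ[A] A :=
  lsum fun n => LinearMap.mulRight A (algebraMap ℚ A (bernoulli (n + 1) / (n + 1)))

theorem bernoulliFunctional_X_pow (n : ℕ) :
    bernoulliFunctional (X ^ n : A[X]) = algebraMap ℚ A (bernoulli (n + 1) / (n + 1)) := by
  rw [bernoulliFunctional, lsum_apply, X_pow_eq_monomial, sum_monomial_index] <;> simp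

theorem bernoulliFunctional_X_pow_mul_X_add_C_pow (a : A) (m n : ℕ) :
    bernoulliFunctional (X ^ m * (X + C a) ^ n) =
      ∑ k ∈ range (n + 1),
        n.choose k * a ^ (n - k) * algebraMap ℚ A (bernoulli (m + k + 1) / (m + k + 1)) := by
  rw [add_pow, mul_sum, map_sum]
  refine sum_congr rfl fun k _ => ?_
  have hterm : X ^ m * (X ^ k * C a ^ (n - k) * (n.choose k : A[X])) =
      (n.choose k * a ^ (n - k)) • X ^ (m + k) := by
    simp only [smul_eq_C_mul, map_mul, map_pow, map_natCast]
    ring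
  rw [hterm, map_smul, bernoulliFunctional_X_pow, smul_eq_mul, Nat.cast_add]

theorem add_one_mul_bernoulliFunctional_X_add_C_pow (a : A) (n : ℕ) :
    (n + 1) * bernoulliFunctional ((X + C a) ^ n) =
      aeval a (Polynomial.bernoulli (n + 1)) - a ^ (n + 1) := by
  have hexpand : aeval a (Polynomial.bernoulli (n + 1)) = a ^ (n + 1) + ∑ k ∈ range (n + 1),
      algebraMap ℚ A (bernoulli (k + 1) * (n + 1).choose (k + 1)) * a ^ (n - k) := by
    rw [Polynomial.bernoulli, map_sum, sum_range_succ', add_comm]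
    simp [aeval_monomial]
  have hchoose (k : ℕ) : ((n : ℚ) + 1) * n.choose k * (bernoulli (k + 1) / (k + 1)) =
      bernoulli (k + 1) * (n + 1).choose (k + 1) := by
    have h : ((n : ℚ) + 1) * n.choose k = (n + 1).choose (k + 1) * (k + 1) := by
      exact_mod_cast Nat.add_one_mul_choose_eq n k
    rw [h]
    field_simp
  have hfunctional := bernoulliFunctional_X_pow_mul_X_add_C_pow a 0 n
  simp only [pow_zero, one_mul, zero_add, Nat.cast_zero] at hfunctional
  rw [hexpand, add_sub_cancel_left, hfunctional, mul_sum]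
  refine sum_congr rfl fun k _ => ?_
  simp only [← hchoose, map_mul, map_add, map_natCast, map_one]
  ring

theorem bernoulliFunctional_X_add_C_one_quarter_pow_two_mul (k : ℕ) :
    bernoulliFunctional ((X + C (1 / 4 : ℂ)) ^ (2 * k)) =
      -(eulerNumber (2 * k) + 1 / (2 * k + 1)) / 4 ^ (2 * k + 1) := by
  have h := add_one_mul_bernoulliFunctional_X_add_C_pow (1 / 4 : ℂ) (2 * k)
  have hB := aeval_bernoulli_one_quarter_of_even (even_two_mul k)
  have hk : (2 * k + 1 : ℂ) ≠ 0 := mod_cast (2 * k).succ_ne_zero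
  have h4 : (4 : ℂ) ^ (2 * k + 1) * (1 / 4) ^ (2 * k + 1) = 1 := by
    rw [← mul_pow]
    norm_num
  rw [eq_div_iff (by simp)]
  refine mul_left_cancel₀ hk ?_
  push_cast at h hB
  linear_combination 4 ^ (2 * k + 1) * h + hB - h4 + div_self hk

theorem bernoulliFunctional_X_pow_mul_X_add_C_one_half_pow (m : ℕ) :
    bernoulliFunctional (X ^ m * (X + C (1 / 2 : ℂ)) ^ m) =
      -(-1 / 16) ^ m / 4 * ∑ k ∈ range (m + 1),
        (-1) ^ k * (m.choose k : ℂ) * (eulerNumber (2 * k) + 1 / (2 * k + 1)) := by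
  have hhalf : (1 / 2 : ℂ) = 2 * (1 / 4) := by norm_num
  have hsq : -(1 / 4 : ℂ) ^ 2 = -1 / 16 := by norm_num
  simp only [hhalf, X_pow_mul_X_add_C_two_mul_pow, map_sum, map_smul, smul_eq_mul,
    bernoulliFunctional_X_add_C_one_quarter_pow_two_mul, hsq, mul_sum]
  refine sum_congr rfl fun k hk => ?_
  have hpow : ((4 : ℂ) ^ (2 * k + 1))⁻¹ = (-1 / 16) ^ k * (-1) ^ k / 4 := by
    rw [← mul_pow, pow_succ, pow_mul, mul_inv, ← inv_pow]
    norm_num [div_eq_mul_inv]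
  rw [← pow_mul_pow_sub (-1 / 16) (mem_range_succ_iff.mp hk)]
  linear_combination
    (-(m.choose k * (-1 / 16) ^ (m - k) * (eulerNumber (2 * k) + 1 / (2 * k + 1)))) * hpow

theorem sum_choose_mul_bernoulli_div_mul_two_pow (m : ℕ) :
    ∑ k ∈ range (m + 1), (m.choose k : ℂ) * ((bernoulli (m + k + 1) : ℂ) / (m + k + 1)) * 2 ^ k =
      2 ^ m * bernoulliFunctional (X ^ m * (X + C (1 / 2 : ℂ)) ^ m) := by
  rw [bernoulliFunctional_X_pow_mul_X_add_C_pow, mul_sum]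
  refine sum_congr rfl fun k hk => ?_
  have hpow : (2 : ℂ) ^ m * (1 / 2) ^ (m - k) = 2 ^ k := by
    rw [← pow_mul_pow_sub 2 (mem_range_succ_iff.mp hk), mul_assoc, ← mul_pow]
    norm_num
  rw [← hpow, eq_ratCast]
  push_cast
  ring

end BernoulliFunctional

theorem stmt_5 (m : ℕ) (hm : 0 < m) :
    (-1) ^ (m + 1) *
        ∑ k ∈ Finset.range (m + 1),
          (m.choose k : ℂ) * ((bernoulli (m + k + 1) : ℂ) / (m + k + 1)) * 2 ^ k
      = 1 / (2 ^ (m + 2) * (2 * m + 1) * ((2 * m).choose m)) +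
        1 / 2 ^ (3 * m + 2) *
          ∑ k ∈ Finset.range (m + 1),
            (-1) ^ k * (m.choose k : ℂ) * eulerNumber (2 * k) := by
  have hsplit : ∑ k ∈ range (m + 1),
      (-1) ^ k * (m.choose k : ℂ) * (eulerNumber (2 * k) + 1 / (2 * k + 1)) =
        ∑ k ∈ range (m + 1), (-1) ^ k * (m.choose k : ℂ) * eulerNumber (2 * k) +
          4 ^ m / ((2 * m + 1) * m.centralBinom) := by
    simp only [← sum_neg_one_pow_mul_choose_div_two_mul_add_one, mul_add, mul_one_div,
      sum_add_distrib]
  have hcoeff : (-1 : ℂ) ^ (m + 1) * (2 ^ m * (-(-1 / 16) ^ m / 4)) = 1 / 2 ^ (3 * m + 2) := by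
    calc (-1 : ℂ) ^ (m + 1) * (2 ^ m * (-(-1 / 16) ^ m / 4)) = (-1 * 2 * (-1 / 16)) ^ m / 4 := by
          rw [mul_pow, mul_pow, pow_succ]; ring
      _ = ((2 ^ 3)⁻¹) ^ m / 2 ^ 2 := by norm_num
      _ = 1 / 2 ^ (3 * m + 2) := by rw [inv_pow, ← pow_mul, pow_add]; field_simp
  have hpow : (2 : ℂ) ^ (3 * m + 2) = 2 ^ (m + 2) * 4 ^ m := by
    rw [show (4 : ℂ) = 2 ^ 2 by norm_num, ← pow_mul, ← pow_add]
    ring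
  rw [sum_choose_mul_bernoulli_div_mul_two_pow,
    bernoulliFunctional_X_pow_mul_X_add_C_one_half_pow, hsplit, ← mul_assoc (2 ^ m), ← mul_assoc,
    hcoeff, mul_add, add_comm, ← Nat.centralBinom]
  congr 1
  rw [hpow]
  field_simp
end
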